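/- Let K : Ω × Ω → ℂ be a non-negative definite sesqui-analytic kernel on a domain Ω ⊆ ℂᵐ whose reproducing kernel Hilbert space contains the constant function 1, with c = ‖1‖². Then the matrix-valued kernel c·(K²∂ᵢ∂̄ⱼ log K)ᵢⱼ − (∂ᵢ∂̄ⱼK)ᵢⱼ is non-negative definite on Ω, i.e. (∂ᵢ∂̄ⱼK) ⪯ c·G_{K⁻¹}. -/

import Mathlib

open scoped ComplexOrder

local notation "conj'" => (starRingEnd ℂ)

variable {m : ℕ}

/-- A scalar kernel is non-negative definite on `s ⊆ ℂᵐ`. -/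
def IsNNDOn (s : Set (Fin m → ℂ)) (K : (Fin m → ℂ) → (Fin m → ℂ) → ℂ) : Prop :=
  ∀ (p : ℕ) (x : Fin p → (Fin m → ℂ)), (∀ i, x i ∈ s) →
    Matrix.PosSemidef (Matrix.of fun i j : Fin p => K (x i) (x j))

/-- An `M_m(ℂ)`-valued kernel is non-negative definite on `s ⊆ ℂᵐ`: every finite block
matrix `(K(xᵢ,xⱼ))` is positive semidefinite. -/
def IsNNDOnM (s : Set (Fin m → ℂ))
    (K : (Fin m → ℂ) → (Fin m → ℂ) → Matrix (Fin m) (Fin m) ℂ) : Prop :=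
  ∀ (p : ℕ) (x : Fin p → (Fin m → ℂ)), (∀ i, x i ∈ s) →
    Matrix.PosSemidef
      (Matrix.of fun i j : Fin p × Fin m => K (x i.1) (x j.1) i.2 j.2)

/-- `K` is sesqui-analytic on `s`: holomorphic in the first set of `m` variables and
anti-holomorphic in the second set. -/
def Sesq (s : Set (Fin m → ℂ)) (K : (Fin m → ℂ) → (Fin m → ℂ) → ℂ) : Prop :=
  (∀ w ∈ s, AnalyticOnNhd ℂ (fun z => K z w) s) ∧
    (∀ z ∈ s, AnalyticOnNhd ℂ (fun w => conj' (K z w)) s)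

/-- `∂ᵢ`, the partial derivative in the `i`-th holomorphic variable. -/
noncomputable def pD (i : Fin m) (K : (Fin m → ℂ) → (Fin m → ℂ) → ℂ)
    (z w : Fin m → ℂ) : ℂ :=
  deriv (fun t => K (Function.update z i t) w) (z i)

/-- `∂̄ⱼ`, the partial derivative in the conjugate of the `j`-th anti-holomorphic
variable. -/
noncomputable def pDb (j : Fin m) (K : (Fin m → ℂ) → (Fin m → ℂ) → ℂ)
    (z w : Fin m → ℂ) : ℂ :=
  conj' (deriv (fun t => conj' (K z (Function.update w j t))) (w j))

/-!
Put `L = c K - 1`. For points `x_a ∈ Ω`, the `2 × 2` minors of the Gram matrix of `L` on the rows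
`x_a`, `x_a + h e_i` and the columns `x_b`, `x_b + h e_j` form a positive semidefinite matrix.
Divided by `h²` they converge, as `h → 0`, to `L² ∂ᵢ∂̄ⱼ log L`, and this is
`c (c K² ∂ᵢ∂̄ⱼ log K - ∂ᵢ∂̄ⱼ K)`.

Computing the limit requires joint regularity, whereas a sesqui-analytic kernel is only assumed
separately analytic, so Hartogs' theorem is needed. By Baire's theorem a separately holomorphic `f`
is bounded over some small disc of `t`; let `γ n` be its `n`-th Taylor coefficient in `t` at
the centre, times `r ^ n`, where each `f s` is holomorphic on a disc of radius larger than `r`. Then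
`log⁺ ‖γ n‖ / n` is uniformly bounded and tends to `0` pointwise, hence in `L¹` by dominated
convergence, and the sub-mean value inequality makes this locally uniform. The Taylor series
therefore bounds `f` on a bidisc around the given point, where boundedness gives continuity.
-/

open Filter Topology Metric Set MeasureTheory Real

section PosSemidef

variable {𝕜 n ι α : Type*} [RCLike 𝕜]

theorem posSemidef_of_tendsto [Finite n] {l : Filter α} [l.NeBot] {A : α → Matrix n n 𝕜}
    {A₀ : Matrix n n 𝕜} (hA : ∀ᶠ h in l, (A h).PosSemidef) (hlim : Tendsto A l (𝓝 A₀)) :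
    A₀.PosSemidef := by
  have := Fintype.ofFinite n
  simp only [Matrix.posSemidef_iff_dotProduct_mulVec] at hA ⊢
  have hadjoint : Continuous (Matrix.conjTranspose : Matrix n n 𝕜 → Matrix n n 𝕜) :=
    continuous_id.matrix_conjTranspose
  refine ⟨tendsto_nhds_unique_of_eventuallyEq ((hadjoint.tendsto A₀).comp hlim) hlim
    (hA.mono fun _ h => h.1.eq), fun x => ?_⟩
  have hquad : Continuous fun B : Matrix n n 𝕜 => star x ⬝ᵥ B.mulVec x := by fun_prop
  exact ge_of_tendsto ((hquad.tendsto A₀).comp hlim) (hA.mono fun _ h => h.2 x)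

open scoped Kronecker in
-- The minors are, up to a factor 2, the compression of `A ⊗ A` to `e_f ⊗ e_g - e_g ⊗ e_f`.
theorem posSemidef_minors [Finite n] [Finite ι] {A : Matrix n n 𝕜} (hA : A.PosSemidef)
    (f g : ι → n) :
    (Matrix.of fun a b =>
      A (f a) (f b) * A (g a) (g b) - A (f a) (g b) * A (g a) (f b)).PosSemidef := by
  change (Matrix.of (fun a b => A (f a) (f b) * A (g a) (g b)) -
    Matrix.of fun a b => A (f a) (g b) * A (g a) (f b)).PosSemidef
  classical
  have := Fintype.ofFinite ι
  set P : Matrix ι ι 𝕜 := Matrix.of fun a b => A (f a) (f b) * A (g a) (g b)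
  set Q : Matrix ι ι 𝕜 := Matrix.of fun a b => A (f a) (g b) * A (g a) (f b)
  have hblocks : ((A ⊗ₖ A).submatrix (Sum.elim (fun a => (f a, g a)) fun a => (g a, f a))
      (Sum.elim (fun a => (f a, g a)) fun a => (g a, f a))) = Matrix.fromBlocks P Q Q P := by
    ext (a | a) (b | b) <;> simp [P, Q, mul_comm]
  have hPSD : (Matrix.fromBlocks P Q Q P).PosSemidef :=
    hblocks ▸ (hA.kronecker hA).submatrix _
  let D : Matrix (ι ⊕ ι) ι 𝕜 := Matrix.fromRows 1 (-1)
  have hcompress : D.conjTranspose * Matrix.fromBlocks P Q Q P * D = (2 : ℝ) • (P - Q) := by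
    rw [Matrix.conjTranspose_fromRows_eq_fromCols_conjTranspose, Matrix.fromCols_mul_fromBlocks,
      Matrix.fromCols_mul_fromRows, Matrix.conjTranspose_neg, Matrix.conjTranspose_one]
    simp only [Matrix.one_mul, Matrix.mul_one, Matrix.neg_mul, Matrix.mul_neg]
    module
  have hminors : (1 / 2 : ℝ) • ((2 : ℝ) • (P - Q)) = P - Q := by module
  rw [← hminors, ← hcompress]
  exact (hPSD.conjTranspose_mul_mul_same _).smul (by norm_num)

end PosSemidef

section MixedDifference

variable {𝕜 E : Type*} [RCLike 𝕜] [NormedAddCommGroup E] [NormedSpace 𝕜 E]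
  {f g k : 𝕜 → 𝕜 → E} {s₀ t₀ : 𝕜}

theorem norm_mixed_difference_le {U V : Set 𝕜} {C : ℝ} (hU : Convex ℝ U) (hV : Convex ℝ V)
    (hg : ∀ s ∈ U, ∀ t ∈ V, HasDerivAt (f s) (g s t) t)
    (hk : ∀ s ∈ U, ∀ t ∈ V, HasDerivAt (fun s => g s t) (k s t) s)
    (hC : ∀ s ∈ U, ∀ t ∈ V, ‖k s t‖ ≤ C) {s : 𝕜} (hs₀ : s₀ ∈ U) (hs : s ∈ U)
    {t : 𝕜} (ht₀ : t₀ ∈ V) (ht : t ∈ V) :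
    ‖f s t - f s₀ t - (f s t₀ - f s₀ t₀)‖ ≤ C * ‖s - s₀‖ * ‖t - t₀‖ := by
  refine hV.norm_image_sub_le_of_norm_hasDerivWithin_le (f := fun t => f s t - f s₀ t)
    (fun τ hτ => ((hg s hs τ hτ).sub (hg s₀ hs₀ τ hτ)).hasDerivWithinAt) (fun τ hτ => ?_) ht₀ ht
  exact hU.norm_image_sub_le_of_norm_hasDerivWithin_le (f := fun s => g s τ)
    (fun σ hσ => (hk σ hσ τ hτ).hasDerivWithinAt) (fun σ hσ => hC σ hσ τ hτ) hs₀ hs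

theorem isLittleO_mixed_difference
    (hg : ∀ᶠ p : 𝕜 × 𝕜 in 𝓝 (s₀, t₀), HasDerivAt (f p.1) (g p.1 p.2) p.2)
    (hk : ∀ᶠ p : 𝕜 × 𝕜 in 𝓝 (s₀, t₀), HasDerivAt (fun s => g s p.2) (k p.1 p.2) p.1)
    (hcont : ContinuousAt (Function.uncurry k) (s₀, t₀)) :
    (fun p : 𝕜 × 𝕜 => f p.1 p.2 - f s₀ p.2 - (f p.1 t₀ - f s₀ t₀)
        - ((p.1 - s₀) * (p.2 - t₀)) • k s₀ t₀)
      =o[𝓝 (s₀, t₀)] fun p => (p.1 - s₀) * (p.2 - t₀) := by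
  refine Asymptotics.isLittleO_iff.mpr fun ε hε => ?_
  have hclose := hcont.eventually (closedBall_mem_nhds _ hε)
  obtain ⟨r, hr, hball⟩ := Metric.eventually_nhds_iff_ball.mp (hg.and (hk.and hclose))
  have hmem : ∀ s ∈ ball s₀ r, ∀ t ∈ ball t₀ r, (s, t) ∈ ball (s₀, t₀) r := fun s hs t ht => by
    rw [← ball_prod_same]; exact ⟨hs, ht⟩
  filter_upwards [ball_mem_nhds (s₀, t₀) hr] with p hp
  rw [← ball_prod_same] at hp
  have hbound := norm_mixed_difference_le (C := ε) (convex_ball s₀ r) (convex_ball t₀ r)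
    (f := fun s t => f s t - (s * t) • k s₀ t₀) (g := fun s t => g s t - s • k s₀ t₀)
    (k := fun s t => k s t - k s₀ t₀)
    (fun s hs t ht => (hball _ (hmem s hs t ht)).1.sub (by
      simpa using ((hasDerivAt_id t).const_mul s).smul_const (k s₀ t₀)))
    (fun s hs t ht => (hball _ (hmem s hs t ht)).2.1.sub (by
      simpa using (hasDerivAt_id s).smul_const (k s₀ t₀)))
    (fun s hs t ht => by simpa [dist_eq_norm] using (hball _ (hmem s hs t ht)).2.2)
    (mem_ball_self hr) hp.1 (mem_ball_self hr) hp.2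
  rw [norm_mul, ← mul_assoc]
  refine le_of_eq_of_le (congrArg norm ?_) hbound
  module

theorem tendsto_mixed_slope
    (hg : ∀ᶠ p : 𝕜 × 𝕜 in 𝓝 (s₀, t₀), HasDerivAt (f p.1) (g p.1 p.2) p.2)
    (hk : ∀ᶠ p : 𝕜 × 𝕜 in 𝓝 (s₀, t₀), HasDerivAt (fun s => g s p.2) (k p.1 p.2) p.1)
    (hcont : ContinuousAt (Function.uncurry k) (s₀, t₀)) :
    Tendsto (fun h : 𝕜 => (h * h)⁻¹ • (f (s₀ + h) (t₀ + h) - f s₀ (t₀ + h)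
      - (f (s₀ + h) t₀ - f s₀ t₀))) (𝓝[≠] 0) (𝓝 (k s₀ t₀)) := by
  have hdiag : Tendsto (fun h : 𝕜 => (s₀ + h, t₀ + h)) (𝓝[≠] 0) (𝓝 (s₀, t₀)) := by
    have hc : Continuous fun h : 𝕜 => (s₀ + h, t₀ + h) := by fun_prop
    simpa using (hc.tendsto 0).mono_left nhdsWithin_le_nhds
  have hlim := ((isLittleO_mixed_difference hg hk hcont).comp_tendsto
    hdiag).tendsto_inv_smul_nhds_zero.add_const (k s₀ t₀)
  rw [zero_add] at hlim
  refine hlim.congr' ?_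
  filter_upwards [self_mem_nhdsWithin] with h hh
  have hh : h ≠ 0 := hh
  simp only [Function.comp_apply, add_sub_cancel_left]
  rw [smul_sub, inv_smul_smul₀ (mul_ne_zero hh hh), sub_add_cancel]

end MixedDifference

section LocalBounds

variable {X Y E : Type*} [SeminormedAddCommGroup E]

theorem exists_ball_forall_norm_le_of_continuousOn [PseudoMetricSpace X]
    [PseudoMetricSpace Y] {f : X → Y → E} {U : Set X} {V : Set Y} {s : X} {t : Y}
    (hf : ContinuousOn (Function.uncurry f) (U ×ˢ V)) (hU : U ∈ 𝓝 s) (hV : V ∈ 𝓝 t) :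
    ∃ r > 0, ball s r ⊆ U ∧ ball t r ⊆ V ∧
      ∃ M, ∀ s' ∈ ball s r, ∀ t' ∈ ball t r, ‖f s' t'‖ ≤ M := by
  have hUV : U ×ˢ V ∈ 𝓝 (s, t) := prod_mem_nhds hU hV
  obtain ⟨r, hr, hball⟩ := Metric.eventually_nhds_iff_ball.mp
    (((hf.continuousAt hUV).norm.eventually_lt_const (lt_add_one _)).and hUV)
  simp only [← ball_prod_same] at hball
  exact ⟨r, hr, fun s' hs' => (hball (s', t) ⟨hs', mem_ball_self hr⟩).2.1,
    fun t' ht' => (hball (s, t') ⟨mem_ball_self hr, ht'⟩).2.2,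
    _, fun s' hs' t' ht' => (hball (s', t') ⟨hs', ht'⟩).1.le⟩

theorem exists_isOpen_forall_norm_le_of_baireSpace [TopologicalSpace Y] [BaireSpace Y]
    {f : X → Y → E} {U : Set X} {V : Set Y} (hV : IsOpen V) (hVne : V.Nonempty)
    (hf : ∀ x ∈ U, ContinuousOn (f x) V) (hbdd : ∀ y ∈ V, ∃ M, ∀ x ∈ U, ‖f x y‖ ≤ M) :
    ∃ O ⊆ V, IsOpen O ∧ O.Nonempty ∧ ∃ M, ∀ x ∈ U, ∀ y ∈ O, ‖f x y‖ ≤ M := by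
  have : BaireSpace V := hV.baireSpace
  have : Nonempty V := hVne.to_subtype
  let A : ℕ → Set V := fun n => ⋂ x ∈ U, {y | ‖f x y‖ ≤ n}
  have hclosed : ∀ n, IsClosed (A n) := fun n =>
    isClosed_biInter fun x hx => isClosed_le (hf x hx).domRestrict.norm continuous_const
  have hunion : ⋃ n, A n = univ := eq_univ_of_forall fun y => by
    obtain ⟨M, hM⟩ := hbdd y y.2
    obtain ⟨n, hn⟩ := exists_nat_ge M
    exact mem_iUnion.mpr ⟨n, mem_iInter₂.mpr fun x hx => (hM x hx).trans hn⟩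
  obtain ⟨n, hn⟩ := nonempty_interior_of_iUnion_of_closed hclosed hunion
  refine ⟨Subtype.val '' interior (A n), Subtype.coe_image_subset _ _,
    hV.isOpenMap_subtype_val _ isOpen_interior, hn.image _, n, ?_⟩
  rintro x hx _ ⟨y, hy, rfl⟩
  exact mem_iInter₂.mp (interior_subset hy) x hx

end LocalBounds

section SeparatelyHolomorphic

variable {E : Type*} [NormedAddCommGroup E] [NormedSpace ℂ E]

theorem norm_slope_sub_deriv_le {f : ℂ → E} {c z : ℂ} {R M : ℝ}
    (hf : DifferentiableOn ℂ f (ball c R)) (hM : ∀ z ∈ ball c R, ‖f z‖ ≤ M)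
    (hz : z ∈ ball c R) (hzc : z ≠ c) :
    ‖slope f c z - deriv f c‖ ≤ 4 * M / R ^ 2 * ‖z - c‖ := by
  have hR : 0 < R := pos_of_mem_ball hz
  have hc : c ∈ ball c R := mem_ball_self hR
  have hmaps : MapsTo f (ball c R) (closedBall (f c) (2 * M)) := fun w hw => by
    rw [mem_closedBall, two_mul]
    exact (dist_le_norm_add_norm _ _).trans (add_le_add (hM w hw) (hM c hc))
  have hderiv : ‖deriv f c‖ ≤ 2 * M / R := Complex.norm_deriv_le_div_of_mapsTo_ball hf hmaps hR
  let g : ℂ → E := fun w => f w - (w - c) • deriv f c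
  have hg : DifferentiableOn ℂ g (ball c R) := hf.sub (by fun_prop)
  have hgmaps : MapsTo g (ball c R) (closedBall (g c) (4 * M)) := fun w hw => by
    have hwR : ‖w - c‖ ≤ R := (mem_ball_iff_norm.mp hw).le
    have hlin : ‖(w - c) • deriv f c‖ ≤ 2 * M := by
      rw [norm_smul]
      exact (mul_le_mul hwR hderiv (norm_nonneg _) hR.le).trans_eq (by field_simp)
    calc dist (g w) (g c) = ‖(f w - f c) - (w - c) • deriv f c‖ := by
          rw [dist_eq_norm]; congr 1; simp only [g]; module
      _ ≤ 2 * M + 2 * M :=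
          norm_sub_le_of_le (by simpa [dist_eq_norm] using hmaps hw) hlin
      _ = 4 * M := by ring
  have hlittleO : (g · - g c) =o[𝓝 c] (fun w => ‖w - c‖ ^ 1) := by
    have hderivAt := ((hf.differentiableAt (isOpen_ball.mem_nhds hc)).hasDerivAt).isLittleO
    simpa [g, sub_right_comm] using hderivAt.norm_right
  have hquad := Complex.dist_le_mul_div_pow_of_mapsTo_ball_of_isLittleO hg hgmaps hlittleO hz
  have hzc' : 0 < ‖z - c‖ := norm_sub_pos_iff.mpr hzc
  have hslope : slope f c z - deriv f c = (z - c)⁻¹ • (g z - g c) := by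
    simp only [g, slope_def_module, sub_self, zero_smul, sub_zero]
    rw [sub_right_comm, smul_sub _ _ ((z - c) • _), inv_smul_smul₀ (sub_ne_zero.mpr hzc)]
  rw [hslope, norm_smul, norm_inv, inv_mul_le_iff₀ hzc', ← dist_eq_norm (g z)]
  refine hquad.trans_eq ?_
  rw [dist_eq_norm]
  ring

/-- A function `f s t` of two complex variables is separately holomorphic on `U ×ˢ V` if it is
holomorphic in each variable when the other one is frozen. It is kept in curried form, and no joint
regularity is assumed. -/
def SeparatelyHolomorphicOn (f : ℂ → ℂ → E) (U V : Set ℂ) : Prop :=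
  (∀ t ∈ V, DifferentiableOn ℂ (fun s => f s t) U) ∧ ∀ s ∈ U, DifferentiableOn ℂ (f s) V

namespace SeparatelyHolomorphicOn

variable {f : ℂ → ℂ → E} {U V U' V' : Set ℂ}

theorem mono (hf : SeparatelyHolomorphicOn f U V) (hU : U' ⊆ U) (hV : V' ⊆ V) :
    SeparatelyHolomorphicOn f U' V' :=
  ⟨fun t ht => (hf.1 t (hV ht)).mono hU, fun s hs => (hf.2 s (hU hs)).mono hV⟩

theorem continuousOn_of_forall_norm_le {M : ℝ} (hf : SeparatelyHolomorphicOn f U V)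
    (hU : IsOpen U) (hV : IsOpen V) (hM : ∀ s ∈ U, ∀ t ∈ V, ‖f s t‖ ≤ M) :
    ContinuousOn (Function.uncurry f) (U ×ˢ V) := by
  rintro ⟨s₀, t₀⟩ ⟨hs₀ : s₀ ∈ U, ht₀ : t₀ ∈ V⟩
  obtain ⟨r, hr, hball⟩ := Metric.isOpen_iff.mp hU s₀ hs₀
  have hlipschitz : ∀ s ∈ ball s₀ r, ∀ t ∈ V,
      dist (f s t) (f s₀ t) ≤ 2 * M / r * dist s s₀ := fun s hs t ht => by
    refine Complex.dist_le_div_mul_dist_of_mapsTo_ball ((hf.1 t ht).mono hball) (fun σ hσ => ?_) hs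
    rw [mem_closedBall, two_mul]
    exact (dist_le_norm_add_norm _ _).trans (add_le_add (hM σ (hball hσ) t ht) (hM s₀ hs₀ t ht))
  refine ContinuousAt.continuousWithinAt (tendsto_iff_dist_tendsto_zero.mpr ?_)
  have hmajorant : Tendsto (fun p : ℂ × ℂ => 2 * M / r * dist p.1 s₀ + dist (f s₀ p.2) (f s₀ t₀))
      (𝓝 (s₀, t₀)) (𝓝 0) := by
    have hfirst : Tendsto (fun p : ℂ × ℂ => 2 * M / r * dist p.1 s₀) (𝓝 (s₀, t₀)) (𝓝 0) := by
      have hc : Continuous fun p : ℂ × ℂ => 2 * M / r * dist p.1 s₀ := by fun_prop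
      simpa using hc.tendsto (s₀, t₀)
    have hsecond : Tendsto (fun p : ℂ × ℂ => f s₀ p.2) (𝓝 (s₀, t₀)) (𝓝 (f s₀ t₀)) :=
      ((hf.2 s₀ hs₀).continuousOn.continuousAt (hV.mem_nhds ht₀)).tendsto.comp continuousAt_snd
    simpa using hfirst.add (tendsto_iff_dist_tendsto_zero.mp hsecond)
  refine squeeze_zero' (.of_forall fun _ => dist_nonneg) ?_ hmajorant
  filter_upwards [prod_mem_nhds (ball_mem_nhds s₀ hr) (hV.mem_nhds ht₀)] with p hp
  exact (dist_triangle _ (f s₀ p.2) _).trans (add_le_add_left (hlipschitz _ hp.1 _ hp.2) _)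

theorem differentiableOn_deriv_of_forall_norm_le [CompleteSpace E] {M R : ℝ} {t₀ : ℂ}
    (hf : SeparatelyHolomorphicOn f U (ball t₀ R)) (hU : IsOpen U) (hR : 0 < R)
    (hM : ∀ s ∈ U, ∀ t ∈ ball t₀ R, ‖f s t‖ ≤ M) :
    DifferentiableOn ℂ (fun s => deriv (f s) t₀) U := by
  have hslopes : ∀ᶠ t in 𝓝[≠] t₀, DifferentiableOn ℂ (fun s => slope (f s) t₀ t) U := by
    filter_upwards [nhdsWithin_le_nhds (ball_mem_nhds t₀ hR)] with t ht
    simp only [slope_def_module]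
    exact ((hf.1 t ht).sub (hf.1 t₀ (mem_ball_self hR))).const_smul _
  refine TendstoLocallyUniformlyOn.differentiableOn (φ := 𝓝[≠] t₀)
    (F := fun t s => slope (f s) t₀ t) (TendstoUniformlyOn.tendstoLocallyUniformlyOn ?_)
    hslopes hU
  have hbound : Tendsto (fun t : ℂ => 4 * M / R ^ 2 * ‖t - t₀‖) (𝓝[≠] t₀) (𝓝 0) := by
    have hc : Continuous fun t : ℂ => 4 * M / R ^ 2 * ‖t - t₀‖ := by fun_prop
    simpa using (hc.tendsto t₀).mono_left nhdsWithin_le_nhds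
  refine Metric.tendstoUniformlyOn_iff.mpr fun δ hδ => ?_
  filter_upwards [hbound.eventually_lt_const hδ, nhdsWithin_le_nhds (ball_mem_nhds t₀ hR),
    self_mem_nhdsWithin] with t ht htR htne s hs
  rw [dist_comm, dist_eq_norm]
  exact (norm_slope_sub_deriv_le (hf.2 s hs) (hM s hs) htR htne).trans_lt ht

variable [CompleteSpace E]

theorem deriv_of_continuousOn (hf : SeparatelyHolomorphicOn f U V)
    (hc : ContinuousOn (Function.uncurry f) (U ×ˢ V)) (hU : IsOpen U) (hV : IsOpen V) :
    SeparatelyHolomorphicOn (fun s t => deriv (f s) t) U V := by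
  refine ⟨fun t ht s hs => ?_, fun s hs => (hf.2 s hs).deriv hV⟩
  obtain ⟨r, hr, hsU, htV, M, hM⟩ := exists_ball_forall_norm_le_of_continuousOn hc
    (hU.mem_nhds hs) (hV.mem_nhds ht)
  exact (((hf.mono hsU htV).differentiableOn_deriv_of_forall_norm_le isOpen_ball hr
    hM).differentiableAt (ball_mem_nhds s hr)).differentiableWithinAt

theorem continuousOn_deriv_of_continuousOn (hf : SeparatelyHolomorphicOn f U V)
    (hc : ContinuousOn (Function.uncurry f) (U ×ˢ V)) (hU : IsOpen U) (hV : IsOpen V) :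
    ContinuousOn (Function.uncurry fun s t => deriv (f s) t) (U ×ˢ V) := by
  rintro ⟨s, t⟩ ⟨hs : s ∈ U, ht : t ∈ V⟩
  obtain ⟨r, hr, hsU, htV, M, hM⟩ := exists_ball_forall_norm_le_of_continuousOn hc
    (hU.mem_nhds hs) (hV.mem_nhds ht)
  have hhalf : ball t (r / 2) ⊆ ball t r := ball_subset_ball (by linarith)
  have hcauchy : ∀ s' ∈ ball s r, ∀ t' ∈ ball t (r / 2), ‖deriv (f s') t'‖ ≤ M / (r / 4) := by
    intro s' hs' t' ht'
    have hclosed : closedBall t' (r / 4) ⊆ ball t r :=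
      closedBall_subset_ball' (by linarith [mem_ball.mp ht'])
    exact Complex.norm_deriv_le_of_forall_mem_sphere_norm_le (by positivity)
      (((hf.2 s' (hsU hs')).mono (hclosed.trans htV)).diffContOnCl_ball subset_rfl)
      fun t'' ht'' => hM s' hs' t'' (hclosed (sphere_subset_closedBall ht''))
  have hcont := ((hf.deriv_of_continuousOn hc hU hV).mono hsU
    (hhalf.trans htV)).continuousOn_of_forall_norm_le isOpen_ball isOpen_ball hcauchy
  exact (hcont.continuousAt (prod_mem_nhds (ball_mem_nhds s hr)
    (ball_mem_nhds t (half_pos hr)))).continuousWithinAt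

theorem iteratedDeriv_of_continuousOn (hf : SeparatelyHolomorphicOn f U V)
    (hc : ContinuousOn (Function.uncurry f) (U ×ˢ V)) (hU : IsOpen U) (hV : IsOpen V) (n : ℕ) :
    SeparatelyHolomorphicOn (fun s t => iteratedDeriv n (f s) t) U V ∧
      ContinuousOn (Function.uncurry fun s t => iteratedDeriv n (f s) t) (U ×ˢ V) := by
  induction n with
  | zero => simpa only [iteratedDeriv_zero] using And.intro hf hc
  | succ n ih =>
    simp only [iteratedDeriv_succ]
    exact ⟨ih.1.deriv_of_continuousOn ih.2 hU hV,
      ih.1.continuousOn_deriv_of_continuousOn ih.2 hU hV⟩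

end SeparatelyHolomorphicOn

end SeparatelyHolomorphic

section SubmeanValue

variable {z : ℂ} {ρ : ℝ}

theorem posLog_norm_le_circleAverage {f : ℂ → ℂ} (hρ : 0 < ρ)
    (hf : AnalyticOnNhd ℂ f (closedBall z ρ)) : log⁺ ‖f z‖ ≤ circleAverage (log⁺ ‖f ·‖) z ρ := by
  rw [← abs_of_pos hρ] at hf
  have hcont : ContinuousOn (log⁺ ‖f ·‖) (sphere z |ρ|) :=
    continuous_posLog.comp_continuousOn (hf.continuousOn.mono sphere_subset_closedBall).norm
  rcases le_or_gt ‖f z‖ 1 with hle | hgt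
  · rw [(posLog_eq_zero_iff _).mpr (by rwa [abs_norm])]
    exact circleAverage_nonneg_of_nonneg fun _ _ => posLog_nonneg
  have hjensen := hf.circleAverage_log_norm hρ.ne' (norm_pos_iff.mp (one_pos.trans hgt))
  have hzeros : 0 ≤ ∑ᶠ u, (MeromorphicOn.divisor f (closedBall z |ρ|) u : ℝ)
      * log (ρ * ‖z - u‖⁻¹) := by
    refine finsum_nonneg fun u => ?_
    by_cases hu : u ∈ closedBall z |ρ|
    · refine mul_nonneg (mod_cast MeromorphicOn.AnalyticOnNhd.divisor_nonneg hf u) ?_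
      rcases (norm_nonneg (z - u)).eq_or_lt with hzu | hzu
      · simp [← hzu]
      · rw [mem_closedBall', dist_eq_norm, abs_of_pos hρ] at hu
        exact log_nonneg ((one_le_div hzu).mpr hu)
    · simp [hu]
  calc log⁺ ‖f z‖ = log ‖f z‖ := posLog_eq_log (by simpa using hgt.le)
    _ ≤ circleAverage (log ‖f ·‖) z ρ := by linarith
    _ ≤ circleAverage (log⁺ ‖f ·‖) z ρ :=
      circleAverage_mono
        (MeromorphicOn.circleIntegrable_log_norm
          (hf.meromorphicOn.mono_set sphere_subset_closedBall))
        (ContinuousOn.circleIntegrable' hcont) fun _ _ => le_max_right _ _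

theorem setLIntegral_ball_eq_lintegral_circleMap {φ : ℂ → ENNReal} (hφ : Measurable φ) :
    ∫⁻ s in ball z ρ, φ s =
      ∫⁻ r in Ioo 0 ρ, ENNReal.ofReal r * ∫⁻ θ in Ioo (-π) π, φ (circleMap z r θ) := by
  have hmem : ∀ p ∈ polarCoord.target, circleMap z p.1 p.2 ∈ ball z ρ ↔ p.1 < ρ := fun p hp => by
    simp [dist_eq_norm, abs_of_pos (mem_Ioi.mp hp.1)]
  have hpolar : ∀ p, z + Complex.polarCoord.symm p = circleMap z p.1 p.2 := fun p => by
    simp [circleMap, Complex.exp_mul_I]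
  have hcircle : Measurable fun p : ℝ × ℝ => circleMap z p.1 p.2 := by
    unfold circleMap; fun_prop
  calc ∫⁻ s in ball z ρ, φ s
      = ∫⁻ s, (ball z ρ).indicator φ (z + s) := by
        rw [lintegral_add_left_eq_self, lintegral_indicator measurableSet_ball]
    _ = ∫⁻ p in polarCoord.target,
          ENNReal.ofReal p.1 * (ball z ρ).indicator φ (circleMap z p.1 p.2) := by
        rw [← Complex.lintegral_comp_polarCoord_symm]
        simp only [hpolar, smul_eq_mul]
    _ = ∫⁻ p in polarCoord.target, (Iio ρ ×ˢ univ).indicator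
          (fun p => ENNReal.ofReal p.1 * φ (circleMap z p.1 p.2)) p := by
        refine setLIntegral_congr_fun polarCoord.open_target.measurableSet fun p hp => ?_
        by_cases hpρ : p.1 < ρ <;> simp [indicator, (hmem p hp), hpρ]
    _ = ∫⁻ p in Ioo 0 ρ ×ˢ Ioo (-π) π, ENNReal.ofReal p.1 * φ (circleMap z p.1 p.2) := by
        rw [setLIntegral_indicator (measurableSet_Iio.prod .univ), polarCoord_target,
          prod_inter_prod, univ_inter, Iio_inter_Ioi]
    _ = ∫⁻ r in Ioo 0 ρ, ENNReal.ofReal r * ∫⁻ θ in Ioo (-π) π, φ (circleMap z r θ) := by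
        rw [Measure.volume_eq_prod, setLIntegral_prod _ (by fun_prop)]
        simp only [lintegral_const_mul' _ _ ENNReal.ofReal_ne_top]

theorem lintegral_circleMap_eq_ofReal_circleAverage {φ : ℂ → ℝ} {r : ℝ} (hφ : ∀ s, 0 ≤ φ s)
    (hint : CircleIntegrable φ z r) :
    ∫⁻ θ in Ioo (-π) π, ENNReal.ofReal (φ (circleMap z r θ)) =
      ENNReal.ofReal (2 * π * circleAverage φ z r) := by
  have hper : Function.Periodic (fun θ => φ (circleMap z r θ)) (2 * π) := fun θ => by
    simp [periodic_circleMap z r θ]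
  have hIoo : IntegrableOn (fun θ => φ (circleMap z r θ)) (Ioo (-π) π) := by
    refine IntegrableOn.mono_set ?_ Ioo_subset_Ioc_self
    exact (hper.intervalIntegrable₀ two_pi_pos.ne' hint (-π) π).1
  rw [← ofReal_integral_eq_lintegral_ofReal hIoo (.of_forall fun _ => hφ _)]
  congr 1
  rw [circleAverage_def, smul_eq_mul, mul_inv_cancel_left₀ two_pi_pos.ne',
    ← integral_Ioc_eq_integral_Ioo, ← intervalIntegral.integral_of_le (by linarith [pi_pos])]
  simpa [two_mul] using hper.intervalIntegral_add_eq (-π) 0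

theorem ofReal_mul_volume_ball_le_setLIntegral {φ : ℂ → ℝ} (hφ : ∀ s, 0 ≤ φ s)
    (hcont : ContinuousOn φ (ball z ρ)) (hsub : ∀ r ∈ Ioo 0 ρ, φ z ≤ circleAverage φ z r) :
    ENNReal.ofReal (φ z) * volume (ball z ρ) ≤ ∫⁻ s in ball z ρ, ENNReal.ofReal (φ s) := by
  set ψ : ℂ → ENNReal := (ball z ρ).indicator fun s => ENNReal.ofReal (φ s) with hψ
  have hψ_eq : EqOn ψ (fun s => ENNReal.ofReal (φ s)) (ball z ρ) := eqOn_indicator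
  have hψ_meas : Measurable ψ := by
    classical
    rw [hψ, ← piecewise_eq_indicator]
    exact ContinuousOn.measurable_piecewise
      (ENNReal.continuous_ofReal.comp_continuousOn hcont)
      continuousOn_const measurableSet_ball
  rw [← setLIntegral_const, ← setLIntegral_congr_fun measurableSet_ball hψ_eq,
    setLIntegral_ball_eq_lintegral_circleMap measurable_const,
    setLIntegral_ball_eq_lintegral_circleMap hψ_meas]
  refine setLIntegral_mono' measurableSet_Ioo fun r hr => ?_
  have hcircle : sphere z |r| ⊆ ball z ρ := by
    rw [abs_of_pos hr.1]; exact sphere_subset_ball hr.2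
  have hψ_circle : ∀ θ, ψ (circleMap z r θ) = ENNReal.ofReal (φ (circleMap z r θ)) := fun θ =>
    hψ_eq (hcircle (circleMap_mem_sphere' z r θ))
  simp only [hψ_circle]
  rw [lintegral_circleMap_eq_ofReal_circleAverage hφ (hcont.mono hcircle).circleIntegrable',
    setLIntegral_const, Real.volume_Ioo, ← ENNReal.ofReal_mul (hφ z)]
  refine mul_le_mul_right (ENNReal.ofReal_le_ofReal ?_) _
  nlinarith [hsub r hr, pi_pos]

end SubmeanValue

section HartogsLemma

variable {γ : ℕ → ℂ → ℂ} {c : ℂ} {R : ℝ}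

theorem tendsto_setLIntegral_posLog_norm_div {M B : ℝ}
    (hγ : ∀ n, ContinuousOn (γ n) (ball c R))
    (hbound : ∀ n, ∀ s ∈ ball c R, ‖γ n s‖ ≤ M * B ^ n)
    (hpointwise : ∀ s ∈ ball c R, ∃ C, ∀ n, ‖γ n s‖ ≤ C) :
    Tendsto (fun n : ℕ => ∫⁻ s in ball c R, ENNReal.ofReal (log⁺ ‖γ n s‖ / n)) atTop (𝓝 0) := by
  have hdominated : ∀ n : ℕ, ∀ s ∈ ball c R, log⁺ ‖γ n s‖ / n ≤ log⁺ M + log⁺ B := by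
    intro n s hs
    rcases n.eq_zero_or_pos with rfl | hn
    · simpa using add_nonneg posLog_nonneg posLog_nonneg
    have hn1 : (1 : ℝ) ≤ n := mod_cast hn
    have hlog : log⁺ ‖γ n s‖ ≤ log⁺ M + n * log⁺ B := by
      rw [← posLog_pow]
      exact (posLog_le_posLog (norm_nonneg _) (hbound n s hs)).trans posLog_mul
    rw [div_le_iff₀ (by positivity)]
    nlinarith [posLog_nonneg (x := M)]
  have hlim : ∀ s ∈ ball c R, Tendsto (fun n : ℕ => log⁺ ‖γ n s‖ / n) atTop (𝓝 0) := by
    intro s hs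
    obtain ⟨C, hC⟩ := hpointwise s hs
    refine squeeze_zero (fun n => div_nonneg posLog_nonneg n.cast_nonneg) (fun n => ?_)
      (tendsto_const_div_atTop_nhds_zero_nat (log⁺ C))
    gcongr
    exact hC n
  have hmeas : ∀ n : ℕ, AEMeasurable (fun s => ENNReal.ofReal (log⁺ ‖γ n s‖ / n))
      (volume.restrict (ball c R)) := fun n =>
    ((continuous_posLog.comp_continuousOn (hγ n).norm).div_const _).aemeasurable
      measurableSet_ball |>.ennreal_ofReal
  have hae : ∀ᵐ s ∂volume.restrict (ball c R), s ∈ ball c R := ae_restrict_mem measurableSet_ball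
  simpa using tendsto_lintegral_of_dominated_convergence' (f := fun _ => 0)
    (fun _ => ENNReal.ofReal (log⁺ M + log⁺ B)) hmeas
    (fun n => hae.mono fun s hs => ENNReal.ofReal_le_ofReal (hdominated n s hs))
    (by simpa only [setLIntegral_const] using
      ENNReal.mul_ne_top ENNReal.ofReal_ne_top measure_ball_lt_top.ne)
    (hae.mono fun s hs => by simpa using ENNReal.tendsto_ofReal (hlim s hs))

theorem eventually_forall_norm_le_pow {r q : ℝ}
    (hγ : ∀ n, DifferentiableOn ℂ (γ n) (ball c R))
    (hint : Tendsto (fun n : ℕ => ∫⁻ s in ball c R, ENNReal.ofReal (log⁺ ‖γ n s‖ / n)) atTop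
      (𝓝 0)) (hr : r < R) (hq : 1 < q) :
    ∀ᶠ n in atTop, ∀ s ∈ closedBall c r, ‖γ n s‖ ≤ q ^ n := by
  have hδ : 0 < R - r := sub_pos.mpr hr
  have hsmall : 0 < ENNReal.ofReal (log q) * volume (ball (0 : ℂ) (R - r)) :=
    ENNReal.mul_pos (by simpa using log_pos hq) (measure_ball_pos _ _ hδ).ne'
  filter_upwards [hint.eventually_lt_const hsmall, eventually_ge_atTop 1] with n hn hn1 s hs
  have hsub : ball s (R - r) ⊆ ball c R := ball_subset_ball' (by linarith [mem_closedBall.mp hs])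
  have hn0 : (0 : ℝ) < n := mod_cast hn1
  have hcircle : ∀ ρ ∈ Ioo 0 (R - r),
      log⁺ ‖γ n s‖ / n ≤ circleAverage (fun s => log⁺ ‖γ n s‖ / n) s ρ := fun ρ hρ => by
    simp only [div_eq_inv_mul, ← smul_eq_mul (n : ℝ)⁻¹]
    rw [circleAverage_fun_smul]
    exact smul_le_smul_of_nonneg_left (posLog_norm_le_circleAverage hρ.1 <|
      ((hγ n).analyticOnNhd isOpen_ball).mono ((closedBall_subset_ball hρ.2).trans hsub))
      (by positivity)
  have harea := ofReal_mul_volume_ball_le_setLIntegral (φ := fun s => log⁺ ‖γ n s‖ / n)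
    (fun s => div_nonneg posLog_nonneg hn0.le)
    ((continuous_posLog.comp_continuousOn ((hγ n).continuousOn.mono hsub).norm).div_const _) hcircle
  rw [Measure.addHaar_ball_center volume s] at harea
  have hlt := lt_of_mul_lt_mul_right'
    ((harea.trans (lintegral_mono_set hsub)).trans_lt hn)
  have hlog : log⁺ ‖γ n s‖ ≤ log⁺ (q ^ n) := by
    rw [posLog_pow, posLog_eq_log (hq.le.trans (le_abs_self q)), mul_comm, ← div_le_iff₀ hn0]
    exact ((ENNReal.ofReal_lt_ofReal_iff (log_pos hq)).mp hlt).le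
  contrapose! hlog
  have hone : 1 ≤ q ^ n := one_le_pow₀ hq.le
  rw [posLog_eq_log (hone.trans (le_abs_self _)), posLog_eq_log (by simpa using hone.trans hlog.le)]
  exact log_lt_log (by positivity) hlog

theorem exists_forall_norm_le_mul_pow {M B r q : ℝ}
    (hγ : ∀ n, DifferentiableOn ℂ (γ n) (ball c R))
    (hbound : ∀ n, ∀ s ∈ ball c R, ‖γ n s‖ ≤ M * B ^ n)
    (hpointwise : ∀ s ∈ ball c R, ∃ C, ∀ n, ‖γ n s‖ ≤ C) (hr : r < R) (hq : 1 < q) :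
    ∃ A, ∀ n, ∀ s ∈ closedBall c r, ‖γ n s‖ ≤ A * q ^ n := by
  obtain ⟨N, hN⟩ := eventually_atTop.mp <| eventually_forall_norm_le_pow hγ
    (tendsto_setLIntegral_posLog_norm_div (fun n => (hγ n).continuousOn) hbound hpointwise) hr hq
  obtain ⟨A, hA⟩ := ((Finset.range N).image fun n => M * B ^ n).exists_le
  refine ⟨max 1 A, fun n s hs => ?_⟩
  have hone : 1 ≤ q ^ n := one_le_pow₀ hq.le
  rcases le_or_gt N n with hn | hn
  · exact (hN n hn s hs).trans (le_mul_of_one_le_left (by positivity) (le_max_left _ _))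
  · calc ‖γ n s‖ ≤ M * B ^ n := hbound n s (closedBall_subset_ball hr hs)
      _ ≤ A := hA _ (Finset.mem_image_of_mem _ (Finset.mem_range.mpr hn))
      _ ≤ max 1 A := le_max_right _ _
      _ ≤ max 1 A * q ^ n := le_mul_of_one_le_right (by positivity) hone

end HartogsLemma

section Hartogs

variable {E : Type*} [NormedAddCommGroup E] [NormedSpace ℂ E] [CompleteSpace E]

theorem norm_le_of_forall_norm_taylorCoeff_le {f : ℂ → E} {c z : ℂ} {R ρ A b : ℝ}
    (hf : DifferentiableOn ℂ f (ball c R)) (hb : 0 ≤ b)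
    (hcoeff : ∀ n, ‖(n.factorial : ℂ)⁻¹ • iteratedDeriv n f c‖ ≤ A * b ^ n)
    (hρ : b * ρ < 1) (hρR : ρ < R) (hz : z ∈ closedBall c ρ) : ‖f z‖ ≤ A * (1 - b * ρ)⁻¹ := by
  have hzρ : ‖z - c‖ ≤ ρ := mem_closedBall_iff_norm.mp hz
  have hρ0 : 0 ≤ ρ := (norm_nonneg _).trans hzρ
  have htaylor := Complex.hasSum_taylorSeries_on_ball hf (closedBall_subset_ball hρR hz)
  rw [← htaylor.tsum_eq]
  refine tsum_of_norm_bounded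
    ((hasSum_geometric_of_lt_one (mul_nonneg hb hρ0) hρ).mul_left A) fun n => ?_
  calc ‖(n.factorial : ℂ)⁻¹ • (z - c) ^ n • iteratedDeriv n f c‖
      = ‖(n.factorial : ℂ)⁻¹ • iteratedDeriv n f c‖ * ‖z - c‖ ^ n := by
        rw [smul_comm, norm_smul, norm_pow, mul_comm]
    _ ≤ A * b ^ n * ρ ^ n :=
        mul_le_mul (hcoeff n) (pow_le_pow_left₀ (norm_nonneg _) hzρ n) (by positivity)
          ((norm_nonneg _).trans (hcoeff n))
    _ = A * (b * ρ) ^ n := by rw [mul_pow, mul_assoc]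

theorem norm_pow_smul_taylorCoeff_le {f : ℂ → E} {c : ℂ} {r ρ M : ℝ} (hρ : 0 < ρ) (hr : 0 ≤ r)
    (hf : DifferentiableOn ℂ f (closedBall c ρ)) (hM : ∀ z ∈ closedBall c ρ, ‖f z‖ ≤ M) (n : ℕ) :
    ‖(r : ℂ) ^ n • (n.factorial : ℂ)⁻¹ • iteratedDeriv n f c‖ ≤ M * (r / ρ) ^ n := by
  have hcauchy := Complex.norm_iteratedDeriv_le_of_forall_mem_sphere_norm_le n hρ
    (hf.diffContOnCl_ball subset_rfl) fun z hz => hM z (sphere_subset_closedBall hz)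
  calc ‖(r : ℂ) ^ n • (n.factorial : ℂ)⁻¹ • iteratedDeriv n f c‖
      = r ^ n * ((n.factorial : ℝ)⁻¹ * ‖iteratedDeriv n f c‖) := by
        simp [norm_smul, abs_of_nonneg hr]
    _ ≤ r ^ n * ((n.factorial : ℝ)⁻¹ * (n.factorial * M / ρ ^ n)) := by gcongr
    _ = M * (r / ρ) ^ n := by rw [div_pow]; field_simp

namespace SeparatelyHolomorphicOn

variable {f : ℂ → ℂ → ℂ}

theorem exists_forall_norm_taylorCoeff_le {s₀ t₁ : ℂ} {R r R' q ρ ε M : ℝ}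
    (hf : SeparatelyHolomorphicOn f (ball s₀ R) (ball t₁ ρ)) (hε : 0 < ε) (hερ : ε < ρ)
    (hM : ∀ s ∈ ball s₀ R, ∀ t ∈ closedBall t₁ ε, ‖f s t‖ ≤ M) (hR' : R' < R) (hr : 0 < r)
    (hrρ : r < ρ) (hq : 1 < q) :
    ∃ A, ∀ n, ∀ s ∈ closedBall s₀ R',
      ‖(r : ℂ) ^ n • (n.factorial : ℂ)⁻¹ • iteratedDeriv n (f s) t₁‖ ≤ A * q ^ n := by
  have hstrip : SeparatelyHolomorphicOn f (ball s₀ R) (ball t₁ ε) :=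
    hf.mono subset_rfl (ball_subset_ball hερ.le)
  have hstripContinuous := hstrip.continuousOn_of_forall_norm_le isOpen_ball isOpen_ball
    fun s hs t ht => hM s hs t (ball_subset_closedBall ht)
  refine exists_forall_norm_le_mul_pow (R := R) (M := M) (B := r / ε)
    (fun n => ?_) (fun n s hs => ?_) (fun s hs => ?_) hR' hq
  · have hderiv := (hstrip.iteratedDeriv_of_continuousOn hstripContinuous isOpen_ball
      isOpen_ball n).1
    exact ((hderiv.1 t₁ (mem_ball_self hε)).const_smul (n.factorial : ℂ)⁻¹).const_smul
      ((r : ℂ) ^ n)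
  · exact norm_pow_smul_taylorCoeff_le hε hr.le
      ((hf.2 s hs).mono (closedBall_subset_ball hερ)) (hM s hs) n
  · have hfs := (hf.2 s hs).mono (closedBall_subset_ball hrρ)
    obtain ⟨C, hC⟩ := (isCompact_closedBall t₁ r).exists_bound_of_continuousOn hfs.continuousOn
    exact ⟨C, fun n => by simpa [hr.ne'] using norm_pow_smul_taylorCoeff_le hr hr.le hfs hC n⟩

theorem exists_forall_norm_le_closedBall {s₀ t₁ : ℂ} {R R' ρ ρ' ε M : ℝ}
    (hf : SeparatelyHolomorphicOn f (ball s₀ R) (ball t₁ ρ)) (hε : 0 < ε) (hερ : ε < ρ)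
    (hM : ∀ s ∈ ball s₀ R, ∀ t ∈ closedBall t₁ ε, ‖f s t‖ ≤ M) (hR' : R' < R) (hρ' : 0 < ρ')
    (hρ'ρ : ρ' < ρ) :
    ∃ C, ∀ s ∈ closedBall s₀ R', ∀ t ∈ closedBall t₁ ρ', ‖f s t‖ ≤ C := by
  obtain ⟨r, hρ'r, hrρ⟩ := exists_between hρ'ρ
  have hr : 0 < r := hρ'.trans hρ'r
  obtain ⟨q, hq, hqr⟩ := exists_between ((one_lt_div hρ').mpr hρ'r)
  obtain ⟨A, hA⟩ := hf.exists_forall_norm_taylorCoeff_le hε hερ hM hR' hr hrρ hq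
  have hratio : q / r * ρ' < 1 := by
    rw [div_mul_eq_mul_div, div_lt_one hr]
    exact (lt_div_iff₀ hρ').mp hqr
  refine ⟨A * (1 - q / r * ρ')⁻¹, fun s hs t ht => norm_le_of_forall_norm_taylorCoeff_le
    (hf.2 s (closedBall_subset_ball hR' hs)) (div_pos (one_pos.trans hq) hr).le
    (fun n => ?_) hratio hρ'ρ ht⟩
  have hn := hA n s hs
  rw [norm_smul, norm_pow, Complex.norm_real, Real.norm_of_nonneg hr.le] at hn
  rw [div_pow, ← mul_div_assoc, le_div_iff₀ (by positivity), mul_comm]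
  exact hn

protected theorem continuousOn {U V : Set ℂ} (hf : SeparatelyHolomorphicOn f U V) (hU : IsOpen U)
    (hV : IsOpen V) : ContinuousOn (Function.uncurry f) (U ×ˢ V) := by
  rintro ⟨s₀, t₀⟩ ⟨hs₀ : s₀ ∈ U, ht₀ : t₀ ∈ V⟩
  obtain ⟨R, hR, hRU⟩ := nhds_basis_closedBall.mem_iff.mp (hU.mem_nhds hs₀)
  obtain ⟨ρ, hρ, hρV⟩ := Metric.isOpen_iff.mp hV t₀ ht₀
  have hthird : ball t₀ (ρ / 3) ⊆ V := (ball_subset_ball (by linarith)).trans hρV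
  obtain ⟨O, hOsub, hO, ⟨t₁, ht₁⟩, M, hM⟩ := exists_isOpen_forall_norm_le_of_baireSpace
    (f := f) (U := closedBall s₀ R) isOpen_ball ⟨t₀, mem_ball_self (by positivity : 0 < ρ / 3)⟩
    (fun s hs => (hf.2 s (hRU hs)).continuousOn.mono hthird)
    (fun t ht => (isCompact_closedBall s₀ R).exists_bound_of_continuousOn
      ((hf.1 t (hthird ht)).continuousOn.mono hRU))
  have ht₁t₀ : dist t₁ t₀ < ρ / 3 := hOsub ht₁
  obtain ⟨ε, hε, hεO⟩ := nhds_basis_closedBall.mem_iff.mp (hO.mem_nhds ht₁)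
  have hnear : SeparatelyHolomorphicOn f (ball s₀ R) (ball t₁ (2 * ρ / 3)) :=
    hf.mono (ball_subset_closedBall.trans hRU)
      ((ball_subset_ball' (by linarith)).trans hρV)
  obtain ⟨C, hC⟩ := hnear.exists_forall_norm_le_closedBall (ε := min ε (ρ / 3))
    (R' := R / 2) (ρ' := ρ / 2) (lt_min hε (by linarith))
    ((min_le_right _ _).trans_lt (by linarith))
    (fun s hs t ht => hM s (ball_subset_closedBall hs) t
      (hεO (closedBall_subset_closedBall (min_le_left _ _) ht)))
    (by linarith) (by linarith) (by linarith)
  have hcont := (hnear.mono (ball_subset_ball (by linarith : R / 2 ≤ R)) (ball_subset_ball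
    (by linarith : ρ / 2 ≤ 2 * ρ / 3))).continuousOn_of_forall_norm_le isOpen_ball isOpen_ball
    fun s hs t ht => hC s (ball_subset_closedBall hs) t (ball_subset_closedBall ht)
  have ht₀t₁ : t₀ ∈ ball t₁ (ρ / 2) := mem_ball'.mpr (by linarith)
  exact (hcont.continuousAt (prod_mem_nhds (ball_mem_nhds s₀ (half_pos hR))
    (isOpen_ball.mem_nhds ht₀t₁))).continuousWithinAt

end SeparatelyHolomorphicOn

end Hartogs

namespace SeparatelyHolomorphicOn

variable {f : ℂ → ℂ → ℂ} {U V : Set ℂ} {s₀ t₀ : ℂ}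

theorem swap (hf : SeparatelyHolomorphicOn f U V) :
    SeparatelyHolomorphicOn (fun t s => f s t) V U :=
  ⟨hf.2, hf.1⟩

protected theorem deriv (hf : SeparatelyHolomorphicOn f U V) (hU : IsOpen U) (hV : IsOpen V) :
    SeparatelyHolomorphicOn (fun s t => deriv (f s) t) U V :=
  hf.deriv_of_continuousOn (hf.continuousOn hU hV) hU hV

protected theorem tendsto_mixed_slope (hf : SeparatelyHolomorphicOn f U V) (hU : IsOpen U)
    (hV : IsOpen V) (hs₀ : s₀ ∈ U) (ht₀ : t₀ ∈ V) :
    Tendsto (fun h => (h * h)⁻¹ • (f (s₀ + h) (t₀ + h) - f s₀ (t₀ + h)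
      - (f (s₀ + h) t₀ - f s₀ t₀))) (𝓝[≠] 0) (𝓝 (deriv (fun s => deriv (f s) t₀) s₀)) := by
  have hmem : U ×ˢ V ∈ 𝓝 (s₀, t₀) := prod_mem_nhds (hU.mem_nhds hs₀) (hV.mem_nhds ht₀)
  have hderiv := hf.deriv hU hV
  refine _root_.tendsto_mixed_slope (g := fun s t => deriv (f s) t)
    (k := fun s t => deriv (fun s => deriv (f s) t) s) ?_ ?_
    (((hderiv.swap.deriv hV hU).swap.continuousOn hU hV).continuousAt hmem)
  · filter_upwards [hmem] with p hp
    exact ((hf.2 p.1 hp.1).differentiableAt (hV.mem_nhds hp.2)).hasDerivAt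
  · filter_upwards [hmem] with p hp
    exact ((hderiv.1 p.2 hp.2).differentiableAt (hU.mem_nhds hp.1)).hasDerivAt

theorem tendsto_minor_div_sq (hf : SeparatelyHolomorphicOn f U V) (hU : IsOpen U) (hV : IsOpen V)
    (hs₀ : s₀ ∈ U) (ht₀ : t₀ ∈ V) :
    Tendsto (fun h => (h * h)⁻¹ * (f s₀ t₀ * f (s₀ + h) (t₀ + h)
      - f s₀ (t₀ + h) * f (s₀ + h) t₀)) (𝓝[≠] 0) (𝓝 (f s₀ t₀ * deriv (fun s => deriv (f s) t₀) s₀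
        - deriv (fun s => f s t₀) s₀ * deriv (f s₀) t₀)) := by
  have hslope₁ := ((hf.1 t₀ ht₀).differentiableAt (hU.mem_nhds hs₀)).hasDerivAt.tendsto_slope_zero
  have hslope₂ := ((hf.2 s₀ hs₀).differentiableAt (hV.mem_nhds ht₀)).hasDerivAt.tendsto_slope_zero
  refine (((hf.tendsto_mixed_slope hU hV hs₀ ht₀).const_mul (f s₀ t₀)).sub
    (hslope₁.mul hslope₂)).congr fun h => ?_
  simp only [smul_eq_mul]
  ring

end SeparatelyHolomorphicOn

section Kernel

variable {Ω : Set (Fin m → ℂ)} {K : (Fin m → ℂ) → (Fin m → ℂ) → ℂ} {z w : Fin m → ℂ}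

/-- The matrix `(K² ∂ᵢ∂̄ⱼ log K)(z, w)`, written without the logarithm so that zeros of `K` are
harmless. -/
noncomputable def logHessian (K : (Fin m → ℂ) → (Fin m → ℂ) → ℂ) (z w : Fin m → ℂ) :
    Matrix (Fin m) (Fin m) ℂ :=
  Matrix.of fun i j => K z w * pD i (pDb j K) z w - pD i K z w * pDb j K z w

/-- The restriction of `K` to the complex lines through `z` and `w` in the directions `i` and `j`.
The second parameter is conjugated, which turns a sesqui-analytic kernel into a separately
holomorphic function. -/
def coordinateSlice (K : (Fin m → ℂ) → (Fin m → ℂ) → ℂ) (z w : Fin m → ℂ) (i j : Fin m)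
    (s t : ℂ) : ℂ :=
  K (Function.update z i s) (Function.update w j (conj' t))

theorem pDb_eq_deriv_conj (j : Fin m) (K : (Fin m → ℂ) → (Fin m → ℂ) → ℂ) (z w : Fin m → ℂ) :
    pDb j K z w = deriv (fun t => K z (Function.update w j (conj' t))) (conj' (w j)) := by
  have h := congrFun (deriv_conj_conj (f := fun t => conj' (K z (Function.update w j t))))
    (conj' (w j))
  simpa only [pDb, Function.comp_def, Complex.conj_conj] using h.symm

theorem continuous_update_apply (z : Fin m → ℂ) (i : Fin m) : Continuous (Function.update z i) :=
  continuous_const.update i continuous_id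

theorem Sesq.separatelyHolomorphicOn_coordinateSlice (hK : Sesq Ω K) (z w : Fin m → ℂ)
    (i j : Fin m) : SeparatelyHolomorphicOn (coordinateSlice K z w i j) (Function.update z i ⁻¹' Ω)
      ((fun t => Function.update w j (conj' t)) ⁻¹' Ω) := by
  refine ⟨fun t ht => (hK.1 _ ht).differentiableOn.comp
    (fun s _ => (hasDerivAt_update z i s).differentiableAt.differentiableWithinAt) fun _ hs => hs,
    fun s hs t ht => ?_⟩
  have hconj : DifferentiableAt ℂ
      (fun τ => conj' (K (Function.update z i s) (Function.update w j τ))) (conj' t) :=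
    ((hK.2 _ hs _ ht).differentiableAt).comp _ (hasDerivAt_update w j _).differentiableAt
  refine DifferentiableAt.differentiableWithinAt (f := fun t => coordinateSlice K z w i j s t) ?_
  simp only [coordinateSlice]
  simpa [Function.comp_def] using hconj.conj_conj

theorem tendsto_kernel_minor_div_sq (hK : Sesq Ω K) (hΩ : IsOpen Ω) (hz : z ∈ Ω) (hw : w ∈ Ω)
    (i j : Fin m) :
    Tendsto (fun h : ℝ => ((h : ℂ) * h)⁻¹ *
      (K z w * K (Function.update z i (z i + h)) (Function.update w j (w j + h)) -
        K z (Function.update w j (w j + h)) * K (Function.update z i (z i + h)) w)) (𝓝[≠] 0)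
      (𝓝 (logHessian K z w i j)) := by
  have hreal : Tendsto (fun h : ℝ => (h : ℂ)) (𝓝[≠] 0) (𝓝[≠] 0) :=
    Complex.continuous_ofReal.continuousWithinAt.tendsto_nhdsWithin fun h hh => by simpa using hh
  have hlim := ((hK.separatelyHolomorphicOn_coordinateSlice z w i j).tendsto_minor_div_sq
    (s₀ := z i) (t₀ := conj' (w j)) (hΩ.preimage (continuous_update_apply z i))
    (hΩ.preimage ((continuous_update_apply w j).comp Complex.continuous_conj))
    (by simpa using hz) (by simpa using hw)).comp hreal
  simpa +unfoldPartialApp only [coordinateSlice, Function.comp_def, map_add, Complex.conj_conj,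
    Complex.conj_ofReal, Function.update_eq_self, logHessian, Matrix.of_apply, pD,
    pDb_eq_deriv_conj] using hlim

theorem IsNNDOn.posSemidef_of_finite {ι : Type*} [Finite ι] (hK : IsNNDOn Ω K)
    (x : ι → Fin m → ℂ) (hx : ∀ a, x a ∈ Ω) :
    (Matrix.of fun a b => K (x a) (x b)).PosSemidef := by
  obtain ⟨n, ⟨e⟩⟩ := Finite.exists_equiv_fin ι
  have hfin := (hK n (x ∘ e.symm) fun _ => hx _).submatrix e
  simpa [Matrix.submatrix, Function.comp_def] using hfin

theorem IsNNDOn.isNNDOnM_logHessian (hK : IsNNDOn Ω K) (hs : Sesq Ω K) (hΩ : IsOpen Ω) :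
    IsNNDOnM Ω (logHessian K) := by
  intro p x hx
  let y : ℝ → Fin p × Fin m → Fin m → ℂ := fun h a =>
    Function.update (x a.1) a.2 (x a.1 a.2 + h)
  have hy : ∀ᶠ h in 𝓝[≠] 0, ∀ a, y h a ∈ Ω := eventually_all.mpr fun a => by
    have hcont : Continuous fun h => y h a :=
      (continuous_update_apply (x a.1) a.2).comp (by fun_prop)
    exact nhdsWithin_le_nhds (hcont.continuousAt.eventually_mem
      (hΩ.mem_nhds (by simpa [y] using hx a.1)))
  refine posSemidef_of_tendsto (l := 𝓝[≠] 0) (A := fun h : ℝ => (h * h)⁻¹ •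
    Matrix.of fun a b : Fin p × Fin m => K (x a.1) (x b.1) * K (y h a) (y h b)
      - K (x a.1) (y h b) * K (y h a) (x b.1)) ?_ ?_
  · filter_upwards [hy] with h hh
    have hgram := hK.posSemidef_of_finite
      (Sum.elim (fun a : Fin p × Fin m => x a.1) (y h)) (by rintro (a | a); exacts [hx a.1, hh a])
    exact (posSemidef_minors hgram Sum.inl Sum.inr).smul (inv_nonneg.mpr (mul_self_nonneg h))
  · refine tendsto_pi_nhds.mpr fun a => tendsto_pi_nhds.mpr fun b => ?_
    simpa [y] using tendsto_kernel_minor_div_sq hs hΩ (hx a.1) (hx b.1) a.2 b.2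

theorem Sesq.const_mul_sub_const (hK : Sesq Ω K) (a b : ℂ) :
    Sesq Ω fun z w => a * K z w - b := by
  refine ⟨fun w hw => (analyticOnNhd_const.mul (hK.1 w hw)).sub analyticOnNhd_const,
    fun z hz => ?_⟩
  simp only [map_sub, map_mul]
  exact (analyticOnNhd_const.mul (hK.2 z hz)).sub analyticOnNhd_const

theorem pD_const_mul_sub_const (i : Fin m) (K : (Fin m → ℂ) → (Fin m → ℂ) → ℂ) (a b : ℂ) :
    pD i (fun z w => a * K z w - b) = fun z w => a * pD i K z w := by
  ext z w
  simp only [pD, deriv_sub_const, deriv_const_mul_field]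

theorem pDb_const_mul_sub_const (j : Fin m) (K : (Fin m → ℂ) → (Fin m → ℂ) → ℂ) (a b : ℂ) :
    pDb j (fun z w => a * K z w - b) = fun z w => a * pDb j K z w := by
  ext z w
  simp only [pDb_eq_deriv_conj, deriv_sub_const, deriv_const_mul_field]

theorem logHessian_const_mul_sub_const (K : (Fin m → ℂ) → (Fin m → ℂ) → ℂ) (a b : ℂ)
    (z w : Fin m → ℂ) :
    logHessian (fun z w => a * K z w - b) z w =
      a • (a • logHessian K z w - b • Matrix.of fun i j => pD i (pDb j K) z w) := by
  ext i j
  have hmixed := congrFun₂ (pD_const_mul_sub_const i (pDb j K) a 0) z w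
  simp only [sub_zero] at hmixed
  simp only [logHessian, pD_const_mul_sub_const, pDb_const_mul_sub_const, hmixed,
    Matrix.smul_apply, Matrix.sub_apply, Matrix.of_apply, smul_eq_mul]
  ring

end Kernel

theorem stmt_12_general (Ω : Set (Fin m → ℂ)) (hΩo : IsOpen Ω)
    (K : (Fin m → ℂ) → (Fin m → ℂ) → ℂ) (hs : Sesq Ω K) (c : ℝ) (hc : 0 < c)
    (hone : IsNNDOn Ω (fun z w => (c : ℂ) * K z w - 1)) :
    IsNNDOnM Ω (fun z w =>
      Matrix.of fun i j : Fin m =>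
        (c : ℂ) * (K z w * pD i (pDb j K) z w - pD i K z w * pDb j K z w) -
          pD i (pDb j K) z w) := by
  intro p x hx
  have hscaled := (hone.isNNDOnM_logHessian (hs.const_mul_sub_const c 1) hΩo p x hx).smul
    (inv_nonneg.mpr hc.le)
  convert hscaled using 1
  ext a b
  have hc' : (c : ℂ) ≠ 0 := mod_cast hc.ne'
  simp only [Matrix.smul_apply, Matrix.of_apply, logHessian_const_mul_sub_const]
  simp [logHessian, hc']

/-- If `K` is a non-negative definite sesqui-analytic kernel on a domain `Ω ⊆ ℂᵐ` whose
reproducing kernel Hilbert space contains the constant function `1`, with `c = ‖1‖²`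
(equivalently, `c·K − 1` is a non-negative definite kernel), then
`(∂ᵢ∂̄ⱼK)ᵢⱼ ⪯ c·(K ∂ᵢ∂̄ⱼK − ∂ᵢK ∂̄ⱼK)ᵢⱼ = c·G_{K⁻¹}`. -/
theorem stmt_12 (Ω : Set (Fin m → ℂ)) (hΩo : IsOpen Ω) (hΩc : IsConnected Ω)
    (K : (Fin m → ℂ) → (Fin m → ℂ) → ℂ) (hs : Sesq Ω K) (hK : IsNNDOn Ω K)
    (c : ℝ) (hc : 0 < c)
    (hone : IsNNDOn Ω (fun z w => (c : ℂ) * K z w - 1)) :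
    IsNNDOnM Ω (fun z w =>
      Matrix.of fun i j : Fin m =>
        (c : ℂ) * (K z w * pD i (pDb j K) z w - pD i K z w * pDb j K z w) -
          pD i (pDb j K) z w) := by
  exact stmt_12_general Ω hΩo K hs c hc hone
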